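/- If S is a weakly infinite dimensional subset of the separable Hilbert space ℓ², then the complement ℓ² \ S is locally connected. -/

import Mathlib

open Set

/-- A separator between `A` and `B` in a topological space: a closed set `L` whose
complement is the union of two disjoint open sets containing `A` and `B` respectively. -/
def IsSeparator {X : Type*} [TopologicalSpace X] (A B L : Set X) : Prop :=
  IsClosed L ∧ ∃ U V : Set X, IsOpen U ∧ IsOpen V ∧ Disjoint U V ∧
    A ⊆ U ∧ B ⊆ V ∧ Lᶜ = U ∪ V

/-- A family of pairs of sets is essential if every choice of separators has
nonempty intersection. -/
def IsEssentialFamily {X : Type*} [TopologicalSpace X] {Γ : Type*}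
    (A B : Γ → Set X) : Prop :=
  ∀ L : Γ → Set X, (∀ i, IsSeparator (A i) (B i) (L i)) → (⋂ i, L i).Nonempty

/-- A space is strongly infinite dimensional if it admits a countably infinite
essential family of pairs of disjoint closed subsets. -/
def StronglyInfiniteDimensional (X : Type*) [TopologicalSpace X] : Prop :=
  ∃ A B : ℕ → Set X,
    (∀ n, IsClosed (A n) ∧ IsClosed (B n) ∧ Disjoint (A n) (B n)) ∧
    IsEssentialFamily A B

/-- The separable Hilbert space `ℓ²` of square-summable real sequences. -/
abbrev EllTwo : Type := lp (fun _ : ℕ => ℝ) 2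

/-! ### The Scarf combinatorial lemma -/

theorem scarf_collapse {β γ : Type*} [DecidableEq β] [DecidableEq γ] (f : β → γ) (s : Finset β)
    (h : s.card = (s.image f).card + 1) :
    ∃ i ∈ s, ∃ j ∈ s, i ≠ j ∧ f i = f j ∧
      (∀ k ∈ s, ((s.erase k).image f = s.image f ↔ k = i ∨ k = j)) ∧
      Set.InjOn f (s.erase i : Finset β) ∧ Set.InjOn f (s.erase j : Finset β) := by
  obtain ⟨i, hi, j, hj, hij, hf⟩ : ∃ i ∈ s, ∃ j ∈ s, i ≠ j ∧ f i = f j :=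
    Finset.exists_ne_map_eq_of_card_lt_of_maps_to (t := s.image f) (by omega)
      (fun x hx => Finset.mem_image_of_mem f hx)
  have himg : ∀ a ∈ s, ∀ b ∈ s, a ≠ b → f a = f b → (s.erase a).image f = s.image f := by
    intro a ha b hb hab hfab
    ext z
    simp only [Finset.mem_image, Finset.mem_erase]
    constructor
    · rintro ⟨x, ⟨_, hx⟩, rfl⟩; exact ⟨x, hx, rfl⟩
    · rintro ⟨x, hx, rfl⟩
      by_cases hxa : x = a
      · exact ⟨b, ⟨hab.symm, hb⟩, by rw [hxa, hfab]⟩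
      · exact ⟨x, ⟨hxa, hx⟩, rfl⟩
  have hinj : ∀ a ∈ s, (s.erase a).image f = s.image f → Set.InjOn f (s.erase a : Finset β) := by
    intro a ha hh
    apply Finset.card_image_iff.mp
    rw [hh, Finset.card_erase_of_mem ha]; omega
  have hi' := himg i hi j hj hij hf
  have hj' := himg j hj i hi hij.symm hf.symm
  refine ⟨i, hi, j, hj, hij, hf, ?_, hinj i hi hi', hinj j hj hj'⟩
  intro k hk
  constructor
  · intro hh
    by_contra hcon
    push Not at hcon
    have : f k ∈ (s.erase k).image f := by rw [hh]; exact Finset.mem_image_of_mem f hk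
    obtain ⟨l, hl, hlk⟩ := Finset.mem_image.mp this
    rw [Finset.mem_erase] at hl
    by_cases hli : l = i
    · have := hinj j hj hj' (x₁ := l) (x₂ := k) (by simp [hli, hij, hi])
        (by simp [hk, hcon.2]) hlk
      exact hl.1 this
    · have := hinj i hi hi' (x₁ := l) (x₂ := k) (by simp [hl.2, hli])
        (by simp [hk, hcon.1]) hlk
      exact hl.1 this
  · rintro (rfl | rfl)
    · exact hi'
    · exact hj'

def ScarfDom {I T α : Type*} [LinearOrder α] (r : I → T → α) (R : Finset T) : Prop :=
  ∀ y, ∃ i, ∀ x ∈ R, r i y ≤ r i x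

def ScarfM {I T α : Type*} [LinearOrder α] (r : I → T → α) (τ : Finset T) (k : I) : Set T :=
  {y | ∀ l, l ≠ k → ∃ x ∈ τ, r l x < r l y}

theorem scarf_door {I T α : Type*} [LinearOrder α] [Fintype I] [DecidableEq I] [Fintype T]
    [DecidableEq T] (r : I → T → α) (hr : ∀ i, Function.Injective (r i)) (τ : Finset T)
    (hne : τ.Nonempty) (hdom : ScarfDom r τ) (hcard : τ.card + 1 = Fintype.card I) :
    ∃ i j, i ≠ j ∧
      (∀ k, (∀ x ∈ τ, ∃ l, l ≠ k ∧ ∀ z ∈ τ, r l x ≤ r l z) ↔ k = i ∨ k = j) ∧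
      (∀ y, (y ∉ τ ∧ ScarfDom r (insert y τ)) ↔
        ((y ∈ ScarfM r τ i ∧ ∀ z ∈ ScarfM r τ i, r i z ≤ r i y) ∨
         (y ∈ ScarfM r τ j ∧ ∀ z ∈ ScarfM r τ j, r j z ≤ r j y))) ∧
      Disjoint (ScarfM r τ i) (ScarfM r τ j) := by
  choose m hmτ hmin using fun i => Finset.exists_min_image τ (r i) hne
  have huniq : ∀ l x, x ∈ τ → (∀ z ∈ τ, r l x ≤ r l z) → x = m l := fun l x hx h =>
    hr l (le_antisymm (h _ (hmτ l)) (hmin l x hx))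
  have himg : Finset.univ.image m = τ := by
    ext x
    simp only [Finset.mem_image, Finset.mem_univ, true_and]
    constructor
    · rintro ⟨a, rfl⟩; exact hmτ a
    · intro hx
      obtain ⟨i, hi⟩ := hdom x
      exact ⟨i, (huniq i x hx hi).symm⟩
  obtain ⟨i, -, j, -, hij, hmij, hiff, hinji, hinjj⟩ := scarf_collapse m Finset.univ
    (by rw [himg, Finset.card_univ, hcard])
  have hMiff : ∀ k y, y ∈ ScarfM r τ k ↔ ∀ l, l ≠ k → r l (m l) < r l y := by
    intro k y
    refine forall_congr' fun l => forall_congr' fun _ => ?_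
    constructor
    · rintro ⟨x, hx, h⟩; exact (hmin l x hx).trans_lt h
    · intro h; exact ⟨m l, hmτ l, h⟩
  have hk : ∀ k, (∀ x ∈ τ, ∃ l, l ≠ k ∧ ∀ z ∈ τ, r l x ≤ r l z) → k = i ∨ k = j := by
    intro k h
    rw [← hiff k (Finset.mem_univ k), himg]
    ext x
    simp only [Finset.mem_image, Finset.mem_erase, Finset.mem_univ, and_true]
    constructor
    · rintro ⟨a, _, rfl⟩; exact hmτ a
    · intro hx
      obtain ⟨l, hl, hl'⟩ := h x hx
      exact ⟨l, hl, (huniq l x hx hl').symm⟩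
  have hinj : ∀ k, (k = i ∨ k = j) → ∀ a b, a ≠ k → b ≠ k → m a = m b → a = b := by
    rintro k (rfl | rfl) a b ha hb hab
    · exact hinji (by simp [ha]) (by simp [hb]) hab
    · exact hinjj (by simp [ha]) (by simp [hb]) hab
  have hsurj : ∀ k, (k = i ∨ k = j) → ∀ x ∈ τ, ∃ l, l ≠ k ∧ m l = x := by
    intro k h x hx
    rw [← hiff k (Finset.mem_univ k), himg] at h
    rw [← h] at hx
    simpa using hx
  -- in M_k, the dominating index has to be k
  have hdomk : ∀ k z, z ∈ ScarfM r τ k → ∀ x ∈ τ, r k z ≤ r k x := by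
    intro k z hz
    obtain ⟨l, hl⟩ := hdom z
    by_cases hlk : l = k
    · subst hlk; exact hl
    · exact absurd (hl _ (hmτ l)) (not_le.mpr ((hMiff k z).mp hz l hlk))
  have back : ∀ k, (k = i ∨ k = j) → ∀ y, (y ∈ ScarfM r τ k ∧ ∀ z ∈ ScarfM r τ k, r k z ≤ r k y) →
      y ∉ τ ∧ ScarfDom r (insert y τ) := by
    rintro k hk y ⟨hy, hmax⟩
    constructor
    · intro hyτ
      obtain ⟨l, hl, rfl⟩ := hsurj k hk y hyτ
      exact lt_irrefl _ ((hMiff _ _).mp hy l hl)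
    · intro z
      by_cases hz : z ∈ ScarfM r τ k
      · refine ⟨k, fun x hx => ?_⟩
        rcases Finset.mem_insert.mp hx with rfl | hx
        · exact hmax z hz
        · exact hdomk k z hz x hx
      · rw [hMiff] at hz
        push Not at hz
        obtain ⟨l, hl, hz⟩ := hz
        refine ⟨l, fun x hx => ?_⟩
        rcases Finset.mem_insert.mp hx with rfl | hx
        · exact hz.trans ((hMiff _ _).mp hy l hl).le
        · exact hz.trans (hmin l x hx)
  refine ⟨i, j, hij, fun k => ⟨hk k, fun h x hx => ?_⟩, ?_, ?_⟩
  · obtain ⟨l, hl, rfl⟩ := hsurj k h x hx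
    exact ⟨l, hl, hmin l⟩
  · intro y
    constructor
    · rintro ⟨hyτ, hD⟩
      obtain ⟨k, hky⟩ := hD y
      have hx : ∀ x ∈ τ, ∃ l, l ≠ k ∧ (∀ z ∈ τ, r l x ≤ r l z) ∧ r l x ≤ r l y := by
        intro x hx
        obtain ⟨l, hl⟩ := hD x
        refine ⟨l, ?_, fun z hz => hl z (Finset.mem_insert_of_mem hz), hl y (Finset.mem_insert_self _ _)⟩
        rintro rfl
        have : x = y := hr l (le_antisymm (hl y (Finset.mem_insert_self _ _))
          (hky x (Finset.mem_insert_of_mem hx)))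
        exact hyτ (this ▸ hx)
      have hkij := hk k (fun x hx' => by
        obtain ⟨l, h1, h2, _⟩ := hx x hx'; exact ⟨l, h1, h2⟩)
      have hyM : y ∈ ScarfM r τ k := by
        rw [hMiff]
        intro l hl
        obtain ⟨l', h1, h2, h3⟩ := hx (m l) (hmτ l)
        have e := huniq l' _ (hmτ l) h2
        have : l = l' := hinj k hkij l l' hl h1 e
        subst this
        refine lt_of_le_of_ne h3 fun h => hyτ ?_
        rw [← hr l h]; exact hmτ l
      have hmx : ∀ z ∈ ScarfM r τ k, r k z ≤ r k y := by
        intro z hz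
        obtain ⟨l, hl⟩ := hD z
        by_cases hlk : l = k
        · subst hlk; exact hl y (Finset.mem_insert_self _ _)
        · exact absurd (hl _ (Finset.mem_insert_of_mem (hmτ l)))
            (not_le.mpr ((hMiff k z).mp hz l hlk))
      rcases hkij with rfl | rfl
      · exact Or.inl ⟨hyM, hmx⟩
      · exact Or.inr ⟨hyM, hmx⟩
    · rintro (h | h)
      · exact back i (Or.inl rfl) y h
      · exact back j (Or.inr rfl) y h
  · rw [Set.disjoint_left]
    intro y h1 h2
    obtain ⟨l, hl⟩ := hdom y
    rw [hMiff] at h1 h2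
    by_cases hli : l = i
    · exact absurd (hl _ (hmτ l)) (not_le.mpr (h2 l (by rw [hli]; exact hij)))
    · exact absurd (hl _ (hmτ l)) (not_le.mpr (h1 l hli))

theorem scarf_max_card {T α : Type*} [LinearOrder α] [Fintype T] [DecidableEq T]
    (f : T → α) (hf : Function.Injective f) (M : Set T) (hM : M.Nonempty) :
    ∃ y, ∀ z, (z ∈ M ∧ ∀ w ∈ M, f w ≤ f z) ↔ z = y := by
  obtain ⟨y, hy, hmax⟩ := Set.exists_max_image M f (Set.toFinite M) hM
  refine ⟨y, fun z => ⟨fun h => hf (le_antisymm (hmax z h.1) (h.2 y hy)), ?_⟩⟩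
  rintro rfl
  exact ⟨hy, hmax⟩

open Classical in
theorem scarf_rooms {P I α : Type*} [LinearOrder α] [Fintype I] [Fintype P]
    [Nontrivial I] [Nonempty P] (r : I → P ⊕ I → α)
    (hr : ∀ i, Function.Injective (r i))
    (h1 : ∀ k y, r k (Sum.inr k) ≤ r k y)
    (h2 : ∀ k i p, i ≠ k → r k (Sum.inl p) < r k (Sum.inr i))
    (c : P ⊕ I → I) (hc : ∀ i, c (Sum.inr i) = i) :
    ∃ R : Finset (P ⊕ I), ScarfDom r R ∧ R.card = Fintype.card I ∧ R.image c = Finset.univ := by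
  obtain ⟨i0⟩ : Nonempty I := inferInstance
  have hI : 1 < Fintype.card I := Fintype.one_lt_card
  by_contra hno
  push Not at hno
  let D : Finset (Finset (P ⊕ I)) := Finset.univ.filter fun τ =>
    ScarfDom r τ ∧ τ.card + 1 = Fintype.card I ∧ τ.image c = Finset.univ.erase i0
  let Rm : Finset (Finset (P ⊕ I)) := Finset.univ.filter fun R =>
    ScarfDom r R ∧ R.card = Fintype.card I ∧ Finset.univ.erase i0 ⊆ R.image c
  let τ0 : Finset (P ⊕ I) := (Finset.univ.erase i0).image Sum.inr
  have hanti : ∀ s t : Finset (P ⊕ I), s ⊆ t → ScarfDom r t → ScarfDom r s := by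
    intro s t hst ht y
    obtain ⟨i, hi⟩ := ht y
    exact ⟨i, fun x hx => hi x (hst hx)⟩
  have hτ0mem : ∀ l, Sum.inr l ∈ τ0 ↔ l ≠ i0 := by
    intro l; simp [τ0]
  have hτ0D : τ0 ∈ D := by
    simp only [D, Finset.mem_filter, Finset.mem_univ, true_and]
    refine ⟨?_, ?_, ?_⟩
    · intro y
      rcases y with p | l
      · refine ⟨i0, fun x hx => ?_⟩
        simp only [τ0, Finset.mem_image, Finset.mem_erase] at hx
        obtain ⟨l, ⟨hl, _⟩, rfl⟩ := hx
        exact (h2 i0 l p hl).le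
      · exact ⟨l, fun x _ => h1 l x⟩
    · rw [Finset.card_image_of_injective _ Sum.inr_injective, Finset.card_erase_of_mem (Finset.mem_univ _),
        Finset.card_univ]
      omega
    · rw [Finset.image_image]
      have : c ∘ Sum.inr = id := funext hc
      rw [this, Finset.image_id]
  have key := Finset.sum_card_bipartiteAbove_eq_sum_card_bipartiteBelow
    (s := D) (t := Rm) (fun τ R => τ ⊆ R)
  -- every room has two doors
  have hroom : ∀ R ∈ Rm, (D.bipartiteBelow (fun τ R => τ ⊆ R) R).card = 2 := by
    intro R hR
    simp only [Rm, Finset.mem_filter, Finset.mem_univ, true_and] at hR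
    obtain ⟨hRd, hRc, hRi⟩ := hR
    have himg : R.image c = Finset.univ.erase i0 := by
      refine (Finset.Subset.antisymm hRi ?_).symm
      intro x hx
      rw [Finset.mem_erase]
      refine ⟨?_, Finset.mem_univ _⟩
      rintro rfl
      apply hno R hRd hRc
      rw [Finset.eq_univ_iff_forall]
      intro z
      by_cases hz : z = x
      · rw [hz]; exact hx
      · exact hRi (by simp [hz])
    obtain ⟨i, hi, j, hj, hij, -, hiff, -, -⟩ := scarf_collapse c R (by
      rw [himg, Finset.card_erase_of_mem (Finset.mem_univ _), Finset.card_univ, hRc]; omega)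
    have : D.bipartiteBelow (fun τ R => τ ⊆ R) R = {R.erase i, R.erase j} := by
      ext τ
      simp only [Finset.mem_bipartiteBelow, D, Finset.mem_filter, Finset.mem_univ, true_and,
        Finset.mem_insert, Finset.mem_singleton]
      constructor
      · rintro ⟨⟨hd, hcd, hcl⟩, hsub⟩
        obtain ⟨a, ha, rfl⟩ : ∃ a ∈ R, τ = R.erase a := by
          have hcs : (R \ τ).card = 1 := by
            rw [Finset.card_sdiff_of_subset hsub]; omega
          obtain ⟨a, ha⟩ := Finset.card_eq_one.mp hcs
          have haR : a ∈ R \ τ := by rw [ha]; simp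
          refine ⟨a, (Finset.mem_sdiff.mp haR).1, ?_⟩
          rw [← Finset.sdiff_singleton_eq_erase, ← ha, Finset.sdiff_sdiff_eq_self hsub]
        rcases (hiff a ha).mp (hcl.trans himg.symm) with rfl | rfl
        · exact Or.inl rfl
        · exact Or.inr rfl
      · have aux : ∀ a ∈ R, (a = i ∨ a = j) → (ScarfDom r (R.erase a) ∧
            (R.erase a).card + 1 = Fintype.card I ∧ (R.erase a).image c = Finset.univ.erase i0) ∧
            R.erase a ⊆ R := by
          intro a ha h
          refine ⟨⟨hanti _ _ (Finset.erase_subset _ _) hRd, ?_, ?_⟩, Finset.erase_subset _ _⟩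
          · rw [Finset.card_erase_of_mem ha]; omega
          · rw [(hiff a ha).mpr h, himg]
        rintro (rfl | rfl)
        · exact aux i hi (Or.inl rfl)
        · exact aux j hj (Or.inr rfl)
    rw [this, Finset.card_pair]
    intro h
    have : i ∈ R.erase j := by simp [hij, hi]
    rw [← h] at this
    simp at this
  -- rooms around a door
  have hdoor : ∀ τ ∈ D, (Rm.bipartiteAbove (fun τ R => τ ⊆ R) τ).card =
      (Finset.univ.filter fun y => y ∉ τ ∧ ScarfDom r (insert y τ)).card := by
    intro τ hτ
    simp only [D, Finset.mem_filter, Finset.mem_univ, true_and] at hτ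
    obtain ⟨hd, hcd, hcl⟩ := hτ
    symm
    refine Finset.card_bij (fun y _ => insert y τ) ?_ ?_ ?_
    · intro y hy
      simp only [Finset.mem_filter, Finset.mem_univ, true_and] at hy
      simp only [Finset.mem_bipartiteAbove, Rm, Finset.mem_filter, Finset.mem_univ, true_and]
      refine ⟨⟨hy.2, ?_, ?_⟩, Finset.subset_insert _ _⟩
      · rw [Finset.card_insert_of_notMem hy.1, hcd]
      · rw [← hcl]; exact Finset.image_subset_image (Finset.subset_insert _ _)
    · intro a ha b hb hab
      simp only [Finset.mem_filter, Finset.mem_univ, true_and] at ha hb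
      have : a ∈ insert b τ := by rw [← hab]; exact Finset.mem_insert_self _ _
      exact (Finset.mem_insert.mp this).resolve_right ha.1
    · intro R hR
      simp only [Finset.mem_bipartiteAbove, Rm, Finset.mem_filter, Finset.mem_univ, true_and] at hR
      obtain ⟨⟨hRd, hRc, hRi⟩, hsub⟩ := hR
      have hcs : (R \ τ).card = 1 := by
        rw [Finset.card_sdiff_of_subset hsub]; omega
      obtain ⟨a, ha⟩ := Finset.card_eq_one.mp hcs
      have haR : a ∈ R \ τ := by rw [ha]; simp
      have hins : insert a τ = R := by
        rw [Finset.insert_eq, ← ha, Finset.sdiff_union_of_subset hsub]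
      refine ⟨a, ?_, hins⟩
      simp only [Finset.mem_filter, Finset.mem_univ, true_and]
      exact ⟨(Finset.mem_sdiff.mp haR).2, by rw [hins]; exact hRd⟩
  have htwo : ∀ τ ∈ D, τ ≠ τ0 → (Rm.bipartiteAbove (fun τ R => τ ⊆ R) τ).card = 2 := by
    intro τ hτ hne
    rw [hdoor τ hτ]
    simp only [D, Finset.mem_filter, Finset.mem_univ, true_and] at hτ
    obtain ⟨hd, hcd, hcl⟩ := hτ
    have hτne : τ.Nonempty := by rw [← Finset.card_pos]; omega
    have hM : ∀ k, Sum.inr k ∈ ScarfM r τ k := by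
      intro k l hl
      by_contra hcon
      push Not at hcon
      apply hne
      have hsl : ∀ x ∈ τ, ∃ m, x = Sum.inr m ∧ m ≠ l := by
        intro x hx
        rcases x with p | m
        · exact absurd (hcon _ hx) (not_le.mpr (h2 l k p hl.symm))
        · refine ⟨m, rfl, ?_⟩
          rintro rfl
          have := hr m (le_antisymm (hcon _ hx) (h1 m (Sum.inr k)))
          exact hl (Sum.inr_injective this).symm
      have hl0 : l = i0 := by
        by_contra hl0
        have : l ∈ τ.image c := by rw [hcl]; simp [hl0]
        obtain ⟨x, hx, hxl⟩ := Finset.mem_image.mp this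
        obtain ⟨m, rfl, hml⟩ := hsl x hx
        rw [hc] at hxl
        exact hml hxl
      subst hl0
      apply Finset.eq_of_subset_of_card_le
      · intro x hx
        obtain ⟨m, rfl, hml⟩ := hsl x hx
        exact (hτ0mem m).mpr hml
      · simp only [D, Finset.mem_filter, Finset.mem_univ, true_and] at hτ0D
        omega
    obtain ⟨i, j, hij, -, hiff, hdis⟩ := scarf_door r hr τ hτne hd hcd
    obtain ⟨yi, hyi⟩ := scarf_max_card (r i) (hr i) _ ⟨_, hM i⟩
    obtain ⟨yj, hyj⟩ := scarf_max_card (r j) (hr j) _ ⟨_, hM j⟩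
    rw [Finset.card_eq_two]
    refine ⟨yi, yj, ?_, ?_⟩
    · rintro rfl
      exact Set.disjoint_left.mp hdis ((hyi yi).mpr rfl).1 ((hyj yi).mpr rfl).1
    · ext y
      simp only [Finset.mem_filter, Finset.mem_univ, true_and, hiff, hyi, hyj, Finset.mem_insert,
        Finset.mem_singleton]
  have hone : (Rm.bipartiteAbove (fun τ R => τ ⊆ R) τ0).card = 1 := by
    rw [hdoor τ0 hτ0D]
    simp only [D, Finset.mem_filter, Finset.mem_univ, true_and] at hτ0D
    obtain ⟨hd, hcd, hcl⟩ := hτ0D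
    have hτne : τ0.Nonempty := by rw [← Finset.card_pos]; omega
    have hM0 : (ScarfM r τ0 i0).Nonempty := by
      obtain ⟨p⟩ : Nonempty P := inferInstance
      refine ⟨Sum.inl p, fun l hl => ⟨Sum.inr l, (hτ0mem l).mpr hl, ?_⟩⟩
      exact lt_of_le_of_ne (h1 l _) fun h => by simpa using hr l h
    obtain ⟨i, j, hij, hk, hiff, hdis⟩ := scarf_door r hr τ0 hτne hd hcd
    have hM1 : ∀ k, k ≠ i0 → (k = i ∨ k = j) → ScarfM r τ0 k = ∅ := by
      intro k hk0 hkij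
      rw [Set.eq_empty_iff_forall_notMem]
      intro y hy
      obtain ⟨x, hx, hxy⟩ := hy i0 hk0.symm
      obtain ⟨m, hm, rfl⟩ := Finset.mem_image.mp hx
      rcases y with p | l
      · exact absurd hxy (not_lt.mpr (h2 i0 m p (Finset.mem_erase.mp hm).1).le)
      · by_cases hlk : l = k
        · subst hlk
          obtain ⟨a, hal, ha⟩ := (hk l).mpr hkij (Sum.inr l) ((hτ0mem l).mpr hk0)
          by_cases ha0 : a = i0
          · subst ha0
            exact absurd hxy (not_lt.mpr (ha _ hx))
          · have := hr a (le_antisymm (ha _ ((hτ0mem a).mpr ha0)) (h1 a _))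
            exact hal (Sum.inr_injective this).symm
        · obtain ⟨x', _, hx'⟩ := hy l hlk
          exact absurd hx' (not_lt.mpr (h1 l x'))
    obtain ⟨y0, hy0⟩ := scarf_max_card (r i0) (hr i0) _ hM0
    rw [Finset.card_eq_one]
    refine ⟨y0, ?_⟩
    ext y
    simp only [Finset.mem_filter, Finset.mem_univ, true_and, hiff, Finset.mem_singleton]
    rcases (hk i0).mp (by
      intro x hx
      obtain ⟨m, hm, rfl⟩ := Finset.mem_image.mp hx
      exact ⟨m, (Finset.mem_erase.mp hm).1, fun z _ => h1 m z⟩) with h | h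
    · subst h
      rw [hy0, hM1 j hij.symm (Or.inr rfl)]; simp
    · subst h
      rw [hy0, hM1 i hij (Or.inl rfl)]; simp
  rw [Finset.sum_congr rfl hroom, ← Finset.add_sum_erase D _ hτ0D, hone,
    Finset.sum_congr rfl (fun τ hτ => htwo τ (Finset.mem_of_mem_erase hτ) (Finset.ne_of_mem_erase hτ))] at key
  simp only [Finset.sum_const, smul_eq_mul] at key
  omega

open Classical in
theorem scarf_grid {I : Type*} [Fintype I] [Nontrivial I] (K : ℕ) (c : (I → ℕ) → I) :
    ∃ x : I → ℕ, ∑ i, x i = K ∧ ∀ i, x i ≤ Fintype.card I ∨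
      ∃ x' : I → ℕ, ∑ i, x' i = K ∧ c x' = i ∧
        ∀ j, x j ≤ x' j + Fintype.card I ∧ x' j ≤ x j + Fintype.card I := by
  let P : Type _ := ↥(Finset.piAntidiag (Finset.univ : Finset I) K)
  have hPsum : ∀ p : P, ∑ i, p.1 i = K := fun p => (Finset.mem_piAntidiag.mp p.2).1
  have mkP : ∀ x : I → ℕ, ∑ i, x i = K → ∃ p : P, p.1 = x := fun x hx =>
    ⟨⟨x, Finset.mem_piAntidiag.mpr ⟨hx, fun i _ => Finset.mem_univ i⟩⟩, rfl⟩
  obtain ⟨i0⟩ : Nonempty I := inferInstance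
  have : Nonempty P := by
    obtain ⟨p, -⟩ := mkP (Pi.single i0 K) (by simp)
    exact ⟨p⟩
  let code : P ⊕ I → ℕ := fun y => (Fintype.equivFin (P ⊕ I) y : ℕ)
  have hcode : Function.Injective code := fun a b h =>
    (Fintype.equivFin (P ⊕ I)).injective (Fin.ext h)
  let v : I → P ⊕ I → ℤ := fun k y => Sum.elim (fun p : P => ((p.1 k : ℕ) : ℤ))
    (fun i => if i = k then -1 else (K : ℤ) + 1) y
  let r : I → P ⊕ I → ℤ ×ₗ ℕ := fun k y => toLex (v k y, code y)
  have hle : ∀ (p : P) k, p.1 k ≤ K := fun p k =>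
    (Finset.single_le_sum (f := p.1) (fun _ _ => Nat.zero_le _) (Finset.mem_univ k)).trans (hPsum p).le
  have hv : ∀ k y z, r k y ≤ r k z → v k y ≤ v k z := by
    intro k y z h
    rcases Prod.Lex.le_iff.mp h with h | h
    · exact h.le
    · exact h.1.le
  have hlt : ∀ k y z, v k y < v k z → r k y < r k z := by
    intro k y z h
    exact Prod.Lex.lt_iff.mpr (Or.inl h)
  obtain ⟨R, hRd, hRc, hRi⟩ := scarf_rooms r
    (fun i a b h => hcode (congrArg (fun q => (ofLex q).2) h))
    (by
      intro k y
      by_cases hy : y = Sum.inr k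
      · rw [hy]
      · refine (hlt _ _ _ ?_).le
        rcases y with p | i
        · simp only [v, Sum.elim_inl, Sum.elim_inr, if_true]
          omega
        · have : i ≠ k := fun h => hy (by rw [h])
          simp only [v, Sum.elim_inr, if_true, if_neg this]
          omega)
    (by
      intro k i p hik
      apply hlt
      simp only [v, Sum.elim_inl, Sum.elim_inr, if_neg hik]
      have := hle p k
      omega)
    (fun y => Sum.elim (fun p : P => c p.1) id y) (fun i => rfl)
  -- the set of colours not coming from slack
  let C : Finset I := Finset.univ.filter fun i => Sum.inr i ∉ R
  have hC : ∀ i ∈ C, ∃ p : P, Sum.inl p ∈ R ∧ c p.1 = i := by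
    intro i hi
    have : i ∈ R.image (fun y => Sum.elim (fun p : P => c p.1) id y) := by rw [hRi]; simp
    obtain ⟨y, hy, hyi⟩ := Finset.mem_image.mp this
    rcases y with p | j
    · exact ⟨p, hy, hyi⟩
    · simp only [Sum.elim_inr, id] at hyi
      subst hyi
      simp [C, hy] at hi
  have hDom : ∀ q : P, ∃ i ∈ C, ∀ p : P, Sum.inl p ∈ R → q.1 i ≤ p.1 i := by
    intro q
    obtain ⟨i, hi⟩ := hRd (Sum.inl q)
    refine ⟨i, ?_, ?_⟩
    · simp only [C, Finset.mem_filter, Finset.mem_univ, true_and]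
      intro h
      have := hv _ _ _ (hi _ h)
      simp only [v, Sum.elim_inl, Sum.elim_inr, if_true] at this
      omega
    · intro p hp
      have := hv _ _ _ (hi _ hp)
      simp only [v, Sum.elim_inl] at this
      exact_mod_cast this
  obtain ⟨i1, hi1, -⟩ := hDom (Classical.arbitrary P)
  obtain ⟨p1, hp1, -⟩ := hC i1 hi1
  -- minimal coordinates
  let σ : Finset P := Finset.univ.filter fun p => Sum.inl p ∈ R
  have hσ : σ.Nonempty := ⟨p1, by simp [σ, hp1]⟩
  choose m hmσ hm using fun i => Finset.exists_min_image σ (fun p => p.1 i) hσ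
  let μ : I → ℕ := fun i => (m i).1 i
  have hμle : ∀ p : P, Sum.inl p ∈ R → ∀ i, μ i ≤ p.1 i := fun p hp i => hm i p (by simp [σ, hp])
  have hsum : K < ∑ i ∈ C, (μ i + 1) := by
    by_contra hcon
    push Not at hcon
    obtain ⟨q, hq⟩ := mkP (fun i => (if i ∈ C then μ i + 1 else 0) +
      (if i = i1 then K - ∑ i ∈ C, (μ i + 1) else 0)) (by
        rw [Finset.sum_add_distrib]
        simp only [Finset.sum_ite_mem, Finset.univ_inter, Finset.sum_ite_eq', Finset.mem_univ, if_true]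
        omega)
    obtain ⟨i, hi, hqi⟩ := hDom q
    have := hqi (m i) (by simpa [σ] using hmσ i)
    rw [hq] at this
    simp only [hi, if_true] at this
    change _ ≤ μ i at this
    omega
  have hCn : C.card ≤ Fintype.card I := Finset.card_le_univ _
  rw [Finset.sum_add_distrib] at hsum
  simp only [Finset.sum_const, smul_eq_mul, mul_one] at hsum
  -- upper bounds
  let ν : I → ℕ := fun i => if i ∈ C then μ i else 0
  have hνsum : ∑ i, ν i = ∑ i ∈ C, μ i := by
    simp only [ν, Finset.sum_ite_mem, Finset.univ_inter]
  have hνle : ∀ p : P, Sum.inl p ∈ R → ∀ i, ν i ≤ p.1 i := by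
    intro p hp i
    by_cases hi : i ∈ C
    · simpa [ν, hi] using hμle p hp i
    · simp [ν, hi]
  have hub : ∀ p : P, Sum.inl p ∈ R → ∀ i, p.1 i ≤ ν i + Fintype.card I := by
    intro p hp i
    have e1 := Finset.add_sum_erase Finset.univ ν (Finset.mem_univ i)
    have e2 := Finset.add_sum_erase Finset.univ p.1 (Finset.mem_univ i)
    have e3 : ∑ x ∈ Finset.univ.erase i, ν x ≤ ∑ x ∈ Finset.univ.erase i, p.1 x :=
      Finset.sum_le_sum fun j _ => hνle p hp j
    have e4 := hPsum p
    omega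
  refine ⟨p1.1, hPsum p1, fun i => ?_⟩
  by_cases hi : i ∈ C
  · right
    obtain ⟨p, hp, hpc⟩ := hC i hi
    refine ⟨p.1, hPsum p, hpc, fun j => ?_⟩
    have a1 := hub p1 hp1 j
    have a2 := hub p hp j
    have a3 := hνle p1 hp1 j
    have a4 := hνle p hp j
    omega
  · left
    have := hub p1 hp1 i
    simpa [ν, hi] using this

/-! ### The Brouwer theorem on the simplex and the cube theorem -/

theorem brouwer_stdSimplex {I : Type*} [Fintype I] [Nontrivial I] (f : (I → ℝ) → (I → ℝ))
    (hf : ContinuousOn f (stdSimplex ℝ I)) (hmap : ∀ x ∈ stdSimplex ℝ I, f x ∈ stdSimplex ℝ I) :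
    ∃ x ∈ stdSimplex ℝ I, f x = x := by
  have hcpt : IsCompact (stdSimplex ℝ I) := isCompact_stdSimplex (𝕜 := ℝ) I
  have huc := hcpt.uniformContinuousOn_of_continuous hf
  rw [Metric.uniformContinuousOn_iff_le] at huc
  -- approximate statement
  have happ : ∀ ε > 0, ∃ x ∈ stdSimplex ℝ I, ∀ i, x i - f x i ≤ ε := by
    intro ε hε
    obtain ⟨δ, hδ, hu⟩ := huc (ε / 2) (by positivity)
    set n : ℝ := (Fintype.card I : ℝ) with hn
    have hn0 : 0 < n := by rw [hn]; exact_mod_cast Fintype.card_pos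
    obtain ⟨K, hK⟩ := exists_nat_gt (n / min δ (ε / 2))
    have hmin : 0 < min δ (ε / 2) := lt_min hδ (by positivity)
    have hK0 : (0 : ℝ) < K := lt_of_le_of_lt (by positivity) hK
    have hnK : n / K < min δ (ε / 2) := by
      rw [div_lt_iff₀ hmin] at hK
      rw [div_lt_iff₀ hK0]; linarith
    have hnKδ : n / K ≤ δ := (hnK.trans_le (min_le_left _ _)).le
    have hnKε : n / K ≤ ε / 2 := (hnK.trans_le (min_le_right _ _)).le
    let s : (I → ℕ) → (I → ℝ) := fun a i => (a i : ℝ) / K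
    have hs : ∀ a : I → ℕ, ∑ i, a i = K → s a ∈ stdSimplex ℝ I := by
      intro a ha
      refine ⟨fun i => by positivity, ?_⟩
      simp only [s]
      rw [← Finset.sum_div, ← Nat.cast_sum, ha]
      exact div_self hK0.ne'
    have hcol : ∀ a : I → ℕ, ∃ i, ∑ i, a i = K → s a i ≤ f (s a) i := by
      intro a
      by_contra hcon
      push Not at hcon
      obtain ⟨i0⟩ : Nonempty I := inferInstance
      have ha := (hcon i0).1
      have h1 := (hs a ha).2
      have h2 := (hmap _ (hs a ha)).2
      have : ∑ i, f (s a) i < ∑ i, s a i :=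
        Finset.sum_lt_sum_of_nonempty Finset.univ_nonempty fun i _ => (hcon i).2
      linarith
    choose c hc using hcol
    obtain ⟨x, hx, hxi⟩ := scarf_grid K c
    refine ⟨s x, hs x hx, fun i => ?_⟩
    have hfx := (hmap _ (hs x hx)).1 i
    rcases hxi i with h | ⟨x', hx', hcx, hd⟩
    · have : s x i ≤ n / K := by
        simp only [s]
        gcongr
        rw [hn]; exact_mod_cast h
      linarith
    · have hcoord : ∀ j, |s x j - s x' j| ≤ n / K := by
        intro j
        simp only [s]
        rw [← sub_div, abs_div, abs_of_pos hK0]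
        gcongr
        have h1 : (x j : ℝ) ≤ x' j + n := by rw [hn]; exact_mod_cast (hd j).1
        have h2 : (x' j : ℝ) ≤ x j + n := by rw [hn]; exact_mod_cast (hd j).2
        rw [abs_le]; constructor <;> linarith
      have hdist : dist (s x) (s x') ≤ δ := by
        rw [dist_pi_le_iff hδ.le]
        intro j
        rw [Real.dist_eq]
        exact (hcoord j).trans hnKδ
      have hfd := (dist_le_pi_dist _ _ i).trans (hu _ (hs x hx) _ (hs x' hx') hdist)
      rw [Real.dist_eq, abs_le] at hfd
      have h3 := (abs_le.mp (hcoord i)).2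
      have h4 := hc x' hx'
      rw [hcx] at h4
      linarith [hfd.1]
  -- compactness
  have hne : (stdSimplex ℝ I).Nonempty := by
    obtain ⟨x, hx, -⟩ := happ 1 one_pos
    exact ⟨x, hx⟩
  let g : (I → ℝ) → ℝ := fun x => Finset.univ.sup' Finset.univ_nonempty fun i => x i - f x i
  have hg : ContinuousOn g (stdSimplex ℝ I) := by
    apply ContinuousOn.finset_sup'_apply
    intro i _
    exact (continuous_apply i).continuousOn.sub ((continuous_apply i).comp_continuousOn hf)
  obtain ⟨x, hx, hmin⟩ := hcpt.exists_isMinOn hne hg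
  have hgx : g x ≤ 0 := by
    apply le_of_forall_pos_le_add
    intro ε hε
    obtain ⟨y, hy, hyi⟩ := happ ε hε
    rw [zero_add]
    exact (hmin hy).trans (Finset.sup'_le _ _ fun i _ => hyi i)
  have hle : ∀ i, x i ≤ f x i := by
    intro i
    have : x i - f x i ≤ g x := Finset.le_sup' (fun i => x i - f x i) (Finset.mem_univ i)
    linarith
  refine ⟨x, hx, ?_⟩
  have hsum : ∑ i, x i = ∑ i, f x i := by rw [hx.2, (hmap x hx).2]
  have := (Finset.sum_eq_sum_iff_of_le (fun i _ => hle i)).mp hsum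
  exact funext fun i => (this i (Finset.mem_univ i)).symm

theorem brouwer_cube {ι : Type*} [Fintype ι] [Nonempty ι] (F : (ι → ℝ) → (ι → ℝ))
    (hF : Continuous F) (hmap : ∀ x, F x ∈ Set.Icc (0 : ι → ℝ) 1) :
    ∃ x ∈ Set.Icc (0 : ι → ℝ) 1, F x = x := by
  set n : ℝ := (Fintype.card ι : ℝ) with hn
  have hn0 : 0 < n := by rw [hn]; exact_mod_cast Fintype.card_pos
  let h : (Option ι → ℝ) → (ι → ℝ) := fun x i => n * x (some i)
  let e : (ι → ℝ) → (Option ι → ℝ) := fun z o => o.elim (1 - ∑ i, z i / n) (fun i => z i / n)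
  have hh : Continuous h := by fun_prop
  have he : Continuous e := by
    apply continuous_pi
    rintro (_ | i)
    · simp only [e, Option.elim]; fun_prop
    · simp only [e, Option.elim]; fun_prop
  have hhe : ∀ z, h (e z) = z := by
    intro z; ext i
    simp only [h, e, Option.elim]
    field_simp
  have hes : ∀ z ∈ Set.Icc (0 : ι → ℝ) 1, e z ∈ stdSimplex ℝ (Option ι) := by
    rintro z ⟨hz0, hz1⟩
    refine ⟨?_, ?_⟩
    · rintro (_ | i)
      · simp only [e, Option.elim]
        rw [← Finset.sum_div, sub_nonneg, div_le_one hn0]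
        calc ∑ i, z i ≤ ∑ i : ι, (1 : ℝ) := Finset.sum_le_sum fun i _ => hz1 i
          _ = n := by simp [hn]
      · exact div_nonneg (hz0 i) hn0.le
    · rw [Fintype.sum_option]
      simp [e]
  obtain ⟨x, hx, hfx⟩ := brouwer_stdSimplex (fun x => e (F (h x)))
    (he.comp (hF.comp hh)).continuousOn (fun x _ => hes _ (hmap _))
  have : F (h x) = h x := by
    conv_rhs => rw [← hfx]
    rw [hhe]
  exact ⟨h x, this ▸ hmap (h x), this⟩

theorem cube_separation {ι : Type*} [Fintype ι] [Nonempty ι] (U V : ι → Set (ι → ℝ))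
    (hU : ∀ i, IsOpen (U i)) (hV : ∀ i, IsOpen (V i)) (hd : ∀ i, Disjoint (U i) (V i))
    (h0 : ∀ i, ∀ x ∈ Set.Icc (0 : ι → ℝ) 1, x i = 0 → x ∈ U i)
    (h1 : ∀ i, ∀ x ∈ Set.Icc (0 : ι → ℝ) 1, x i = 1 → x ∈ V i) :
    ∃ x ∈ Set.Icc (0 : ι → ℝ) 1, ∀ i, x ∉ U i ∧ x ∉ V i := by
  let g : ι → (ι → ℝ) → ℝ := fun i x => Metric.infDist x (U i)ᶜ - Metric.infDist x (V i)ᶜ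
  have hg : ∀ i, Continuous (g i) := fun i =>
    (Metric.continuous_infDist_pt _).sub (Metric.continuous_infDist_pt _)
  have hUne : ∀ i, ((U i)ᶜ).Nonempty := fun i =>
    ⟨1, fun h => Set.disjoint_left.mp (hd i) h (h1 i 1 ⟨zero_le_one, le_rfl⟩ rfl)⟩
  have hVne : ∀ i, ((V i)ᶜ).Nonempty := fun i =>
    ⟨0, fun h => Set.disjoint_left.mp (hd i) (h0 i 0 ⟨le_rfl, zero_le_one⟩ rfl) h⟩
  have hgU : ∀ i x, x ∈ U i → 0 < g i x := by
    intro i x hx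
    have a : 0 < Metric.infDist x (U i)ᶜ :=
      ((hU i).isClosed_compl.notMem_iff_infDist_pos (hUne i)).mp (by simpa using hx)
    have b : Metric.infDist x (V i)ᶜ = 0 :=
      Metric.infDist_zero_of_mem (fun h => Set.disjoint_left.mp (hd i) hx h)
    simp only [g]; linarith
  have hgV : ∀ i x, x ∈ V i → g i x < 0 := by
    intro i x hx
    have a : 0 < Metric.infDist x (V i)ᶜ :=
      ((hV i).isClosed_compl.notMem_iff_infDist_pos (hVne i)).mp (by simpa using hx)
    have b : Metric.infDist x (U i)ᶜ = 0 :=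
      Metric.infDist_zero_of_mem (fun h => Set.disjoint_left.mp (hd i) h hx)
    simp only [g]; linarith
  obtain ⟨x, hx, hfx⟩ := brouwer_cube (fun x i => max 0 (min 1 (x i + g i x)))
    (by
      apply continuous_pi
      intro i
      exact continuous_const.max (continuous_const.min ((continuous_apply i).add (hg i))))
    (fun x => ⟨fun i => le_max_left _ _, fun i => max_le zero_le_one (min_le_left _ _)⟩)
  refine ⟨x, hx, fun i => ?_⟩
  have hi : max 0 (min 1 (x i + g i x)) = x i := congrFun hfx i
  have x0 : 0 ≤ x i := hx.1 i
  have x1 : x i ≤ 1 := hx.2 i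
  constructor
  · intro hxU
    have hp := hgU i x hxU
    have : x i = 1 := by
      by_contra hne
      have hlt : x i < 1 := lt_of_le_of_ne x1 hne
      have : x i < min 1 (x i + g i x) := lt_min hlt (by linarith)
      have := this.trans_le (le_max_right 0 _)
      linarith
    exact Set.disjoint_left.mp (hd i) hxU (h1 i x hx this)
  · intro hxV
    have hp := hgV i x hxV
    have : x i = 0 := by
      by_contra hne
      have hlt : 0 < x i := lt_of_le_of_ne x0 (Ne.symm hne)
      have : max 0 (min 1 (x i + g i x)) < x i :=
        max_lt hlt ((min_le_right _ _).trans_lt (by linarith))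
      linarith
    exact Set.disjoint_left.mp (hd i) (h0 i x hx this) hxV

/-! ### Separated sets and the main argument -/

theorem separated_open {X : Type*} [MetricSpace X] (P R : Set X)
    (h1 : Disjoint (closure P) R) (h2 : Disjoint P (closure R)) :
    ∃ U V : Set X, IsOpen U ∧ IsOpen V ∧ Disjoint U V ∧ P ⊆ U ∧ R ⊆ V := by
  have h := separatedNhds_iff_disjoint.mpr (CompletelyNormalSpace.completely_normal h1 h2)
  obtain ⟨U, V, hU, hV, hPU, hRV, hd⟩ := h
  exact ⟨U, V, hU, hV, hd, hPU, hRV⟩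

/-- Clamping to the unit interval. -/
noncomputable def unitClamp (x : ℝ) : ℝ := max 0 (min 1 x)

theorem unitClamp_continuous : Continuous unitClamp := by unfold unitClamp; fun_prop

theorem unitClamp_nonneg (x : ℝ) : 0 ≤ unitClamp x := le_max_left _ _

theorem unitClamp_le (x : ℝ) : unitClamp x ≤ 1 := max_le zero_le_one (min_le_left _ _)

theorem unitClamp_eq {x : ℝ} (h0 : 0 ≤ x) (h1 : x ≤ 1) : unitClamp x = x := by
  rw [unitClamp, min_eq_right h1, max_eq_right h0]

theorem ellTwo_coord_continuous (k : ℕ) : Continuous fun x : EllTwo => x k :=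
  (lp.evalCLM ℝ (fun _ : ℕ => ℝ) 2 k).continuous

/-- Existence of a small Hilbert cube in the coordinates `≥ M`. -/
theorem exists_hilbert_cube (M : ℕ) (δ : ℝ) (hδ : 0 < δ) :
    ∃ (w : (ℕ → ℝ) → EllTwo) (η : ℕ → ℝ), Continuous w ∧ (∀ a, ‖w a‖ < δ) ∧ (∀ i, 0 < η i) ∧
      (∀ a i, w a (M + i) = unitClamp (a i) * η i) := by
  let η : ℕ → ℝ := fun i => δ / 2 / 2 / 2 ^ i
  have hη0 : ∀ i, 0 < η i := fun i => by positivity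
  have hηs : HasSum η (δ / 2) := hasSum_geometric_two' (δ / 2)
  let u : ℕ → (ℕ → ℝ) → EllTwo := fun i a => lp.single 2 (M + i) (unitClamp (a i) * η i)
  have hu : ∀ i a, ‖u i a‖ ≤ η i := by
    intro i a
    simp only [u]
    rw [lp.norm_single (by norm_num), Real.norm_eq_abs,
      abs_of_nonneg (mul_nonneg (unitClamp_nonneg _) (hη0 i).le)]
    exact mul_le_of_le_one_left (hη0 i).le (unitClamp_le _)
  have hsum : ∀ a, Summable fun i => u i a := fun a =>
    Summable.of_norm_bounded hηs.summable (fun i => hu i a)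
  refine ⟨fun a => ∑' i, u i a, η, ?_, ?_, hη0, ?_⟩
  · refine continuous_tsum (fun i => ?_) hηs.summable hu
    exact (lp.isometry_single (E := fun _ : ℕ => ℝ) (p := 2) (M + i)).continuous.comp
      ((unitClamp_continuous.comp (continuous_apply i)).mul continuous_const)
  · intro a
    refine lt_of_le_of_lt (tsum_of_norm_bounded hηs (fun i => hu i a)) (by linarith)
  · intro a i
    have h := (lp.evalCLM ℝ (fun _ : ℕ => ℝ) 2 (M + i)).map_tsum (hsum a)
    change (∑' i, u i a) (M + i) = ∑' j, (u j a) (M + i) at h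
    rw [h, tsum_eq_single i]
    · simp only [u]; rw [lp.single_apply_self]
    · intro j hj
      simp only [u]
      rw [lp.single_apply_ne]
      omega

theorem exists_finite_approx (d : EllTwo) (O : Set EllTwo) (hO : IsOpen O) (hd : d ∈ O) :
    ∃ d' ∈ O, ∃ M : ℕ, ∀ i, d' (M + i) = 0 := by
  have h := lp.hasSum_single (E := fun _ : ℕ => ℝ) (p := 2) (by norm_num) d
  have h' := h.eventually (hO.mem_nhds hd)
  obtain ⟨s, hs⟩ := h'.exists
  refine ⟨_, hs, s.sup id + 1, fun i => ?_⟩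
  rw [lp.coeFn_sum, Finset.sum_apply]
  refine Finset.sum_eq_zero fun j hj => ?_
  rw [lp.single_apply_ne]
  have : j ≤ s.sup id := Finset.le_sup (f := id) hj
  omega

theorem isOpen_shift {E : Type*} [NormedAddCommGroup E] (p q : E) (O : Set E) (hO : IsOpen O)
    (hq : q ∈ O) : IsOpen {d | p + d ∈ O} ∧ q - p ∈ {d | p + d ∈ O} :=
  ⟨hO.preimage (continuous_const.add continuous_id), by simpa using hq⟩

theorem exists_finite_shift (p q : EllTwo) (O : Set EllTwo) (hO : IsOpen O) (hq : q ∈ O) :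
    ∃ d : EllTwo, p + d ∈ O ∧ ∃ M : ℕ, ∀ i, d (M + i) = 0 := by
  obtain ⟨h1, h2⟩ := isOpen_shift p q O hO hq
  obtain ⟨d, hd, h⟩ := exists_finite_approx (q - p) _ h1 h2
  exact ⟨d, hd, h⟩

theorem strong_core {X : Type*} [MetricSpace X] (S U0 V0 : Set X)
    (hU0 : IsOpen U0) (hV0 : IsOpen V0) (hd0 : Disjoint U0 V0)
    (φ : ℝ × (ℕ → ℝ) → X) (hφ : Continuous φ) (hφS : ∀ z, φ z ∉ U0 ∪ V0 → φ z ∈ S)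
    (hφ0 : ∀ a, φ (0, a) ∈ U0) (hφ1 : ∀ a, φ (1, a) ∈ V0)
    (lo hi : ℕ → Set X) (hlo : ∀ i, IsClosed (lo i)) (hhi : ∀ i, IsClosed (hi i))
    (hlohi : ∀ i x, x ∈ lo i → x ∈ hi i → False)
    (hφlo : ∀ t a i, a i = 0 → φ (t, a) ∈ lo i)
    (hφhi : ∀ t a i, a i = 1 → φ (t, a) ∈ hi i) :
    StronglyInfiniteDimensional S := by
  obtain ⟨Q, hQdef⟩ : ∃ Q : Set X, Q = φ '' (Set.Icc (0 : ℝ) 1 ×ˢ Set.pi Set.univ fun _ : ℕ => Set.Icc (0 : ℝ) 1) := ⟨_, rfl⟩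
  have hQ : IsCompact Q := by
    rw [hQdef]
    exact (isCompact_Icc.prod (isCompact_univ_pi fun _ => isCompact_Icc)).image hφ
  obtain ⟨K, hKdef⟩ : ∃ K : Set X, K = Q \ (U0 ∪ V0) := ⟨_, rfl⟩
  have hK : IsCompact K := by
    rw [hKdef]
    exact hQ.diff (hU0.union hV0)
  have hKS : K ⊆ S := by
    rw [hKdef, hQdef]
    rintro z ⟨⟨y, -, rfl⟩, hz⟩
    by_contra hzS
    exact hzS (hφS y hz)
  refine ⟨fun i => (↑) ⁻¹' (K ∩ lo i), fun i => (↑) ⁻¹' (K ∩ hi i), ?_, ?_⟩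
  · intro i
    refine ⟨(hK.isClosed.inter (hlo i)).preimage continuous_subtype_val,
      (hK.isClosed.inter (hhi i)).preimage continuous_subtype_val, ?_⟩
    rw [Set.disjoint_left]
    intro x h1 h2
    exact hlohi i _ h1.2 h2.2
  · intro L hL
    by_contra hempty
    rw [Set.not_nonempty_iff_eq_empty] at hempty
    choose hLc U V hU hV hUV hAU hBV hLUV using hL
    -- extend the separators to the whole space
    have hext : ∀ i, ∃ U' V' : Set X, IsOpen U' ∧ IsOpen V' ∧ Disjoint U' V' ∧
        (((↑) '' U i) ∩ K) ∪ (Q ∩ lo i) ⊆ U' ∧ (((↑) '' V i) ∩ K) ∪ (Q ∩ hi i) ⊆ V' := by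
      intro i
      -- general separation fact
      have hsep : ∀ (W W' : Set S), IsOpen W' → Disjoint W W' → ∀ (F F' : Set X),
          IsClosed F → IsClosed F' → (∀ x ∈ F, x ∈ F' → False) →
          (∀ x : S, (x : X) ∈ K ∩ F → x ∈ W) →
          (∀ x : S, (x : X) ∈ K ∩ F' → x ∈ W') →
          Disjoint (closure ((((↑) '' W) ∩ K) ∪ (Q ∩ F))) ((((↑) '' W') ∩ K) ∪ (Q ∩ F')) := by
        intro W W' hW' hdis F F' hF hF' hFF' hFW hFW'
        obtain ⟨G, hG, rfl⟩ := isOpen_induced_iff.mp hW'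
        have hcl : closure (((↑) '' W : Set X) ∩ K) ⊆ K ∩ Gᶜ := by
          refine closure_minimal ?_ (hK.isClosed.inter hG.isClosed_compl)
          rintro _ ⟨⟨x, hx, rfl⟩, hxK⟩
          exact ⟨hxK, fun h => Set.disjoint_left.mp hdis hx h⟩
        rw [closure_union, (hQ.isClosed.inter hF).closure_eq, Set.disjoint_left]
        rintro z (hz | hz) (⟨⟨x, hx, rfl⟩, hxK⟩ | hz')
        · exact (hcl hz).2 hx
        · have := hcl hz
          exact this.2 (hFW' ⟨z, hKS this.1⟩ ⟨this.1, hz'.2⟩)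
        · exact Set.disjoint_left.mp hdis (hFW x ⟨hxK, hz.2⟩) hx
        · exact hFF' z hz.2 hz'.2
      refine separated_open _ _ ?_ ?_
      · exact hsep (U i) (V i) (hV i) (hUV i) (lo i) (hi i) (hlo i) (hhi i) (hlohi i)
          (fun x hx => hAU i hx) (fun x hx => hBV i hx)
      · exact (hsep (V i) (U i) (hU i) (hUV i).symm (hi i) (lo i) (hhi i) (hlo i)
          (fun x a b => hlohi i x b a) (fun x hx => hBV i hx) (fun x hx => hAU i hx)).symm
    choose U' V' hU' hV' hd' hsU hsV using hext
    have hcover : K ⊆ ⋃ i, (U' i ∪ V' i) := by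
      intro z hz
      have : (⟨z, hKS hz⟩ : S) ∉ ⋂ i, L i := by rw [hempty]; simp
      rw [Set.mem_iInter] at this
      push Not at this
      obtain ⟨i, hzi⟩ := this
      have hzi' : (⟨z, hKS hz⟩ : S) ∈ (L i)ᶜ := hzi
      rw [hLUV i] at hzi'
      rw [Set.mem_iUnion]
      refine ⟨i, ?_⟩
      rcases hzi' with h | h
      · exact Or.inl (hsU i (Or.inl ⟨⟨_, h, rfl⟩, hz⟩))
      · exact Or.inr (hsV i (Or.inl ⟨⟨_, h, rfl⟩, hz⟩))
    obtain ⟨t, ht⟩ := hK.elim_finite_subcover _ (fun i => (hU' i).union (hV' i)) hcover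
    classical
    let θ : (Option t → ℝ) → ℝ × (ℕ → ℝ) := fun b =>
      (b none, fun i => if h : i ∈ t then b (some ⟨i, h⟩) else 0)
    have hθ : Continuous θ := by
      refine (continuous_apply none).prodMk (continuous_pi fun i => ?_)
      by_cases h : i ∈ t
      · simp only [h, dif_pos]; exact continuous_apply _
      · simp only [h, dif_neg, not_false_eq_true]; exact continuous_const
    have hθQ : ∀ b ∈ Set.Icc (0 : Option t → ℝ) 1, φ (θ b) ∈ Q := by
      intro b hb
      rw [hQdef]
      refine ⟨θ b, ⟨⟨hb.1 none, hb.2 none⟩, fun i _ => ?_⟩, rfl⟩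
      by_cases h : i ∈ t
      · simp only [θ, h, dif_pos]; exact ⟨hb.1 _, hb.2 _⟩
      · simp [θ, h]
    obtain ⟨b, hb, hbn⟩ := cube_separation
      (fun o : Option t => (φ ∘ θ) ⁻¹' (o.elim U0 fun i => U' i))
      (fun o : Option t => (φ ∘ θ) ⁻¹' (o.elim V0 fun i => V' i))
      (by
        rintro (_ | i)
        · exact hU0.preimage (hφ.comp hθ)
        · exact (hU' i).preimage (hφ.comp hθ))
      (by
        rintro (_ | i)
        · exact hV0.preimage (hφ.comp hθ)
        · exact (hV' i).preimage (hφ.comp hθ))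
      (by
        rintro (_ | i)
        · exact hd0.preimage _
        · exact (hd' i).preimage _)
      (by
        rintro (_ | i) b hb hb0
        · change φ (b none, _) ∈ U0
          rw [hb0]; exact hφ0 _
        · refine hsU i (Or.inr ⟨hθQ b hb, hφlo _ _ _ ?_⟩)
          simpa using hb0)
      (by
        rintro (_ | i) b hb hb0
        · change φ (b none, _) ∈ V0
          rw [hb0]; exact hφ1 _
        · refine hsV i (Or.inr ⟨hθQ b hb, hφhi _ _ _ ?_⟩)
          simpa using hb0)
    have hbK : φ (θ b) ∈ K := by
      rw [hKdef]
      exact ⟨hθQ b hb, fun h => h.elim (hbn none).1 (hbn none).2⟩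
    have := ht hbK
    simp only [Set.mem_iUnion] at this
    obtain ⟨i, hit, h⟩ := this
    exact h.elim (hbn (some ⟨i, hit⟩)).1 (hbn (some ⟨i, hit⟩)).2

theorem ball_segment {E : Type*} [NormedAddCommGroup E] [NormedSpace ℝ E] (x0 p d w : E)
    (ρ t : ℝ) (h0 : 0 ≤ t) (h1 : t ≤ 1) (ha : p + w ∈ Metric.ball x0 ρ)
    (hb : (p + d) + w ∈ Metric.ball x0 ρ) : p + t • d + w ∈ Metric.ball x0 ρ := by
  have := (convex_ball x0 ρ) ha hb (sub_nonneg.mpr h1) h0 (by ring)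
  convert this using 1
  module

theorem strong_of_separated (S : Set EllTwo) (x0 : EllTwo) (ρ : ℝ) (U0 V0 : Set EllTwo)
    (hU0 : IsOpen U0) (hV0 : IsOpen V0) (hd0 : Disjoint U0 V0)
    (hcov : Metric.ball x0 ρ ∩ Sᶜ ⊆ U0 ∪ V0) (p q : EllTwo)
    (hp : p ∈ Metric.ball x0 ρ) (hpU : p ∈ U0) (hq : q ∈ Metric.ball x0 ρ) (hqV : q ∈ V0) :
    StronglyInfiniteDimensional S := by
  -- replace `q` by `p + d` with `d` finitely supported
  obtain ⟨d, hd, M, hM⟩ := exists_finite_shift p q _ (Metric.isOpen_ball.inter hV0) ⟨hq, hqV⟩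
  obtain ⟨δ1, hδ1, hb1⟩ := Metric.isOpen_iff.mp (Metric.isOpen_ball.inter hU0) p ⟨hp, hpU⟩
  obtain ⟨δ2, hδ2, hb2⟩ := Metric.isOpen_iff.mp (Metric.isOpen_ball.inter hV0) (p + d) hd
  obtain ⟨w, η, hwc, hwn, hη, hwcoord⟩ := exists_hilbert_cube M (min δ1 δ2) (lt_min hδ1 hδ2)
  have hb1' : ∀ a, p + w a ∈ Metric.ball x0 ρ ∩ U0 := fun a => hb1 (by
    rw [Metric.mem_ball, dist_eq_norm, add_sub_cancel_left]
    exact (hwn a).trans_le (min_le_left _ _))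
  have hb2' : ∀ a, (p + d) + w a ∈ Metric.ball x0 ρ ∩ V0 := fun a => hb2 (by
    rw [Metric.mem_ball, dist_eq_norm, add_sub_cancel_left]
    exact (hwn a).trans_le (min_le_right _ _))
  let φ : ℝ × (ℕ → ℝ) → EllTwo := fun z => p + unitClamp z.1 • d + w z.2
  have hφ : Continuous φ := by
    exact (continuous_const.add ((unitClamp_continuous.comp continuous_fst).smul
      continuous_const)).add (hwc.comp continuous_snd)
  have hφball : ∀ z, φ z ∈ Metric.ball x0 ρ := by
    intro z
    exact ball_segment x0 p d (w z.2) ρ (unitClamp z.1) (unitClamp_nonneg _) (unitClamp_le _)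
      (hb1' z.2).1 (hb2' z.2).1
  have hφ0 : ∀ a, φ (0, a) ∈ U0 := by
    intro a
    have : φ (0, a) = p + w a := by simp [φ, unitClamp_eq]
    rw [this]; exact (hb1' a).2
  have hφ1 : ∀ a, φ (1, a) ∈ V0 := by
    intro a
    have : φ (1, a) = p + d + w a := by simp [φ, unitClamp_eq]
    rw [this]; exact (hb2' a).2
  have hφcoord : ∀ t a i, φ (t, a) (M + i) = p (M + i) + unitClamp (a i) * η i := by
    intro t a i
    simp only [φ, lp.coeFn_add, lp.coeFn_smul, Pi.add_apply, Pi.smul_apply, hM, hwcoord]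
    simp
  let lo : ℕ → Set EllTwo := fun i => {x | x (M + i) ≤ p (M + i)}
  let hi : ℕ → Set EllTwo := fun i => {x | p (M + i) + η i ≤ x (M + i)}
  have hlo : ∀ i, IsClosed (lo i) := fun i =>
    isClosed_le (ellTwo_coord_continuous _) continuous_const
  have hhi : ∀ i, IsClosed (hi i) := fun i =>
    isClosed_le continuous_const (ellTwo_coord_continuous _)
  have hlohi : ∀ i x, x ∈ lo i → x ∈ hi i → False := by
    intro i x h1 h2
    have h1' : x (M + i) ≤ p (M + i) := h1
    have h2' : p (M + i) + η i ≤ x (M + i) := h2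
    linarith [hη i]
  refine strong_core S U0 V0 hU0 hV0 hd0 φ hφ
    (fun z hz => by_contra fun hzS => hz (hcov ⟨hφball z, hzS⟩)) hφ0 hφ1 lo hi hlo hhi hlohi ?_ ?_
  · intro t a i h
    change φ (t, a) (M + i) ≤ p (M + i)
    rw [hφcoord, h, unitClamp_eq le_rfl zero_le_one]; simp
  · intro t a i h
    change p (M + i) + η i ≤ φ (t, a) (M + i)
    rw [hφcoord, h, unitClamp_eq zero_le_one le_rfl]; simp

/-- If `S ⊆ ℓ²` is weakly infinite dimensional, then `ℓ² \ S` is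
locally connected. -/
theorem locallyConnected_compl_of_weaklyInfiniteDimensional_ellTwo
    (S : Set EllTwo) (hS : ¬ StronglyInfiniteDimensional S) :
    LocallyConnectedSpace (Sᶜ : Set EllTwo) := by
  refine locallyConnectedSpace_of_connected_bases (fun x (ε : ℝ) => Metric.ball x ε)
    (fun _ ε => 0 < ε) (fun x => Metric.nhds_basis_ball) ?_
  intro x ρ _
  rw [← Topology.IsInducing.subtypeVal.isPreconnected_image]
  have himg : ((↑) '' Metric.ball x ρ : Set EllTwo) = Metric.ball (x : EllTwo) ρ ∩ Sᶜ := by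
    ext z
    constructor
    · rintro ⟨y, hy, rfl⟩; exact ⟨hy, y.2⟩
    · rintro ⟨hz, hzS⟩; exact ⟨⟨z, hzS⟩, hz, rfl⟩
  rw [himg]
  set B := Metric.ball (x : EllTwo) ρ ∩ Sᶜ with hB
  intro u v hu hv hcov ⟨p, hpB, hpu⟩ ⟨q, hqB, hqv⟩
  by_contra hne
  have hdis : ∀ z ∈ B, z ∈ u → z ∈ v → False := fun z h1 h2 h3 => hne ⟨z, h1, h2, h3⟩
  obtain ⟨U0, V0, hU0, hV0, hd, hsU, hsV⟩ := separated_open (B ∩ u) (B ∩ v)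
    (by
      refine Disjoint.mono_right inter_subset_right (Disjoint.closure_left ?_ hv)
      rw [Set.disjoint_left]
      exact fun z h1 h2 => hdis z h1.1 h1.2 h2)
    (by
      refine Disjoint.mono_left inter_subset_right (Disjoint.closure_right ?_ hu)
      rw [Set.disjoint_left]
      exact fun z h1 h2 => hdis z h2.1 h1 h2.2)
  refine hS (strong_of_separated S x ρ U0 V0 hU0 hV0 hd ?_ p q hpB.1 (hsU ⟨hpB, hpu⟩) hqB.1
    (hsV ⟨hqB, hqv⟩))
  intro z hz
  rcases hcov hz with h | h
  · exact Or.inl (hsU ⟨hz, h⟩)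
  · exact Or.inr (hsV ⟨hz, h⟩)
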